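/- arXiv:2001.01086 — 3 statements merged into one kernel-verified Lean document; each statement's English description precedes it below -/
import Mathlib

section
/- Let {W_n}_{n≥0} be a 2-orthogonal monic polynomial sequence over ℂ with recurrence coefficients β_n, α_n, γ_n, let p, q, a ∈ ℂ, ω(x) = x² + px + q, and let {P_n}, {R_n}, {a_n}, {b_n} be its general quadratic decomposition (with the convention a_{−1} = 0). Then for every n ≥ 2: b_{n+1}(x) − (x − ω(a) + (a − β_{2n+1})(a + p + β_{2n+1}) − α_{2n+2} − α_{2n+1})·b_n(x) + (α_{2n+1}α_{2n} + γ_{2n}(p + β_{2n+1} + β_{2n−1}))·b_{n−1}(x) + γ_{2n}γ_{2n−2}·b_{n−2}(x) + (p + β_{2n+2} + β_{2n+1})·P_{n+1}(x) + (γ_{2n+1} + γ_{2n} + α_{2n+1}(p + β_{2n+1} + β_{2n}))·P_n(x) + (α_{2n+1}γ_{2n−1} + γ_{2n}α_{2n−1})·P_{n−1}(x) = 0. -/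
/-!
Write `ω = X² + pX + q`. Since `ω` has degree two, a polynomial has at most one expression
`U(ω) + (x - a) V(ω)` (the two parts have degrees of opposite parity; `qd_unique`). Moreover
`(x - a)² = (ω(x) - ω(a)) - (p + 2a)(x - a)`, so each recurrence relation of `W` splits into two
relations among the components `P`, `A`, `B`, `R` (`qd_step`).

With `n = m + 2` and `Y = x - ω(a)`, the relation for `W_{2n+3}` expresses `B_{n+1}` through
`Y A_n`; the second part of the relation for `W_{2n+2}` expresses `Y A_n` through `Y R_n`,
`Y A_{n-1}` and `Y R_{n-1}`; and these three are eliminated by the first parts of the relations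
for `W_{2n+2}`, `W_{2n+1}` and `W_{2n}`. The claim is the resulting linear combination.
-/

open Polynomial

/-- `prevP A n` is `A (n-1)` with the convention `A (-1) = 0`. -/
noncomputable def prevP (A : ℕ → Polynomial ℂ) : ℕ → Polynomial ℂ
  | 0 => 0
  | n + 1 => A n

lemma qd_unique (p q a : ℂ) (U V : Polynomial ℂ)
    (h : U.comp (X^2 + C p * X + C q) + (X - C a) * V.comp (X^2 + C p * X + C q) = 0) :
    U = 0 ∧ V = 0 := by
  have hdeg : (X^2 + C p * X + C q : Polynomial ℂ).natDegree = 2 := by compute_degree!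
  have hinj : ∀ T : Polynomial ℂ, T.comp (X^2 + C p * X + C q) = 0 → T = 0 := by
    intro T hT
    rcases comp_eq_zero_iff.mp hT with h0 | ⟨-, h1⟩
    · exact h0
    · rw [h1, natDegree_C] at hdeg
      omega
  have hV : V = 0 := by
    by_contra hV
    have h1 : U.comp (X^2 + C p * X + C q)
        = -((X - C a) * V.comp (X^2 + C p * X + C q)) := by
      linear_combination h
    have h2 := congrArg natDegree h1
    rw [natDegree_neg, natDegree_mul (X_sub_C_ne_zero a) (fun h0 => hV (hinj V h0)),
      natDegree_comp, natDegree_comp, hdeg, natDegree_X_sub_C] at h2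
    omega
  subst hV
  exact ⟨hinj U (by simpa using h), rfl⟩

/-- One step `W₃ = (x - b) W₂ - c W₁ - d W₀` of the recurrence, read off on the components of a
quadratic decomposition `W_i = U_i(ω) + (x - a) V_i(ω)`. -/
lemma qd_step (p q a b c d : ℂ) {W₀ W₁ W₂ W₃ U₀ U₁ U₂ U₃ V₀ V₁ V₂ V₃ : Polynomial ℂ}
    (h₀ : W₀ = U₀.comp (X^2 + C p * X + C q) + (X - C a) * V₀.comp (X^2 + C p * X + C q))
    (h₁ : W₁ = U₁.comp (X^2 + C p * X + C q) + (X - C a) * V₁.comp (X^2 + C p * X + C q))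
    (h₂ : W₂ = U₂.comp (X^2 + C p * X + C q) + (X - C a) * V₂.comp (X^2 + C p * X + C q))
    (h₃ : W₃ = U₃.comp (X^2 + C p * X + C q) + (X - C a) * V₃.comp (X^2 + C p * X + C q))
    (hrec : W₃ = (X - C b) * W₂ - C c * W₁ - C d * W₀) :
    U₃ = C (a - b) * U₂ + (X - C (a^2 + p*a + q)) * V₂ - C c * U₁ - C d * U₀ ∧
    V₃ = U₂ - C (a + p + b) * V₂ - C c * V₁ - C d * V₀ := by
  have key := qd_unique p q a
    (U₃ - (C (a - b) * U₂ + (X - C (a^2 + p*a + q)) * V₂ - C c * U₁ - C d * U₀))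
    (V₃ - (U₂ - C (a + p + b) * V₂ - C c * V₁ - C d * V₀)) (by
      rw [h₀, h₁, h₂, h₃] at hrec
      simp only [sub_comp, add_comp, mul_comp, pow_comp, C_comp, X_comp, C_add, C_sub, C_mul, C_pow]
      linear_combination hrec)
  exact ⟨sub_eq_zero.mp key.1, sub_eq_zero.mp key.2⟩

theorem stmt_6 (W : ℕ → Polynomial ℂ) (β α γ : ℕ → ℂ)
    (hγ : ∀ n, 1 ≤ n → γ n ≠ 0)
    (hW0 : W 0 = 1) (hW1 : W 1 = X - C (β 0))
    (hW2 : W 2 = (X - C (β 1)) * W 1 - C (α 1))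
    (hWrec : ∀ n, W (n+3) = (X - C (β (n+2))) * W (n+2)
        - C (α (n+2)) * W (n+1) - C (γ (n+1)) * W n)
    (p q a : ℂ) (P R A B : ℕ → Polynomial ℂ)
    (hP : ∀ n, (P n).Monic ∧ (P n).natDegree = n)
    (hR : ∀ n, (R n).Monic ∧ (R n).natDegree = n)
    (hA : ∀ n, (A n).natDegree ≤ n)
    (hB : ∀ n, (B n).natDegree ≤ n)
    (hQDe : ∀ n, W (2*n) = (P n).comp (X^2 + C p * X + C q)
        + (X - C a) * (prevP A n).comp (X^2 + C p * X + C q))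
    (hQDo : ∀ n, W (2*n+1) = (B n).comp (X^2 + C p * X + C q)
        + (X - C a) * (R n).comp (X^2 + C p * X + C q)) :
    ∀ m : ℕ,
      B (m+3)
      - (X - C (a^2 + p*a + q)
          + C ((a - β (2*m+5)) * (a + p + β (2*m+5)) - α (2*m+6) - α (2*m+5))) * B (m+2)
      + C (α (2*m+5) * α (2*m+4) + γ (2*m+4) * (p + β (2*m+5) + β (2*m+3))) * B (m+1)
      + C (γ (2*m+4) * γ (2*m+2)) * B m
      + C (p + β (2*m+6) + β (2*m+5)) * P (m+3)
      + C (γ (2*m+5) + γ (2*m+4) + α (2*m+5) * (p + β (2*m+5) + β (2*m+4))) * P (m+2)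
      + C (α (2*m+5) * γ (2*m+3) + γ (2*m+4) * α (2*m+3)) * P (m+1) = 0 := by
  intro m
  have s7 := (qd_step p q a _ _ _ (hQDe (m+2)) (hQDo (m+2)) (hQDe (m+3)) (hQDo (m+3))
    (hWrec (2*m+4))).1
  have s6 := qd_step p q a _ _ _ (hQDo (m+1)) (hQDe (m+2)) (hQDo (m+2)) (hQDe (m+3))
    (hWrec (2*m+3))
  have s5 := (qd_step p q a _ _ _ (hQDe (m+1)) (hQDo (m+1)) (hQDe (m+2)) (hQDo (m+2))
    (hWrec (2*m+2))).1
  have s4 := (qd_step p q a _ _ _ (hQDo m) (hQDe (m+1)) (hQDo (m+1)) (hQDe (m+2))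
    (hWrec (2*m+1))).1
  obtain ⟨s6P, s6A⟩ := s6
  simp only [prevP, Nat.add_assoc, Nat.reduceAdd, C_add, C_sub, C_mul, C_pow] at *
  linear_combination s7 + (X - (C a ^ 2 + C p * C a + C q)) * s6A
    + (C a + C p + C (β (2*m+5))) * s6P + C (α (2*m+5)) * s5 + C (γ (2*m+4)) * s4
end

section
/- Let β, α₁, α₂, p, q, a ∈ ℂ and γ ∈ ℂ∖{0}, let {W_n} be the 2-orthogonal MPS with recurrence coefficients β_{2n} = −(p+β), β_{2n+1} = β (n ≥ 0), α_{2n+1} = α₁, α_{2n+2} = α₂ (n ≥ 0), γ_n = (−1)ⁿγ (n ≥ 1), and let {P_n}, {R_n}, {a_n}, {b_n} be its general quadratic decomposition with respect to ω(x) = x² + px + q and a. Then, with the convention R_{−1} = 0, for every n ≥ 1: R_{n+1}(x) = (x − ω(a) + (a − β)(a + p + β) − α₂ − α₁)·R_n(x) − (α₁α₂ + γ(p + 2β))·R_{n−1}(x) − γ²·R_{n−2}(x). -/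
/-!
Write `s = x + p + β`, `t = x - β`, so that `s * t = ω(x) - q - β(p + β)` and `t - s = -(p + 2β)`.
Eliminating the even-indexed polynomials from the two-periodic recurrence leaves a four-term
recurrence for the odd-indexed ones, `O_k = W_{2k+1}`, in which `x` only enters through `s * t`:
`O_{m+2} = (s t - α₁ - α₂) O_{m+1} - (α₁ α₂ + γ (p + 2β)) O_m - γ² O_{m-1}`.
All coefficients are therefore polynomials in `ω(x)`, and since the decomposition
`f(ω(x)) + (x - a) g(ω(x))` determines `g` (`right_eq_zero_of_quadratic_decomp`), the same
recurrence holds for the components `R_n`.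
-/

open Polynomial

/-- Uniqueness of the second component of a quadratic decomposition. The substitution
`x ↦ -p - x` fixes `ω`, so subtracting the reflected identity leaves `(2x + p) g(ω(x)) = 0`. -/
lemma right_eq_zero_of_quadratic_decomp (p q a : ℂ) (f g : Polynomial ℂ)
    (h : f.comp (X^2 + C p * X + C q) + (X - C a) * g.comp (X^2 + C p * X + C q) = 0) :
    g = 0 := by
  have hω : (X^2 + C p * X + C q : Polynomial ℂ).comp (-C p - X) = X^2 + C p * X + C q := by
    simp only [add_comp, mul_comp, pow_comp, X_comp, C_comp]
    ring
  have h' := congrArg (fun r : Polynomial ℂ => r.comp (-C p - X)) h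
  beta_reduce at h'
  rw [add_comp, mul_comp, comp_assoc, comp_assoc, hω, sub_comp, X_comp, C_comp, zero_comp] at h'
  have h2 : (2 * X + C p) * g.comp (X^2 + C p * X + C q) = 0 := by
    linear_combination h - h'
  have hlin : (2 * X + C p : Polynomial ℂ) ≠ 0 := by
    intro h0
    have := congrArg (fun r : Polynomial ℂ => r.coeff 1) h0
    simp [coeff_C, coeff_ofNat_mul] at this
  rcases comp_eq_zero_iff.mp ((mul_eq_zero.mp h2).resolve_left hlin) with hg | ⟨-, hc⟩
  · exact hg
  · -- the remaining alternative would make `ω` constant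
    have := congrArg (fun r : Polynomial ℂ => r.coeff 2) hc
    simp [coeff_X, coeff_C] at this

theorem stmt_9 (β α₁ α₂ p q a γ : ℂ) (hγ : γ ≠ 0)
    (W : ℕ → Polynomial ℂ)
    (hW0 : W 0 = 1) (hW1 : W 1 = X - C (-(p + β)))
    (hW2 : W 2 = (X - C β) * W 1 - C α₁)
    (hWrec : ∀ n : ℕ, W (n+3) = (X - C (if n % 2 = 0 then -(p + β) else β)) * W (n+2)
        - C (if n % 2 = 0 then α₂ else α₁) * W (n+1) - C ((-1 : ℂ)^(n+1) * γ) * W n)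
    (P R A B : ℕ → Polynomial ℂ)
    (hP : ∀ n, (P n).Monic ∧ (P n).natDegree = n)
    (hR : ∀ n, (R n).Monic ∧ (R n).natDegree = n)
    (hA : ∀ n, (A n).natDegree ≤ n)
    (hB : ∀ n, (B n).natDegree ≤ n)
    (hQDe : ∀ n, W (2*n) = (P n).comp (X^2 + C p * X + C q)
        + (X - C a) * (prevP A n).comp (X^2 + C p * X + C q))
    (hQDo : ∀ n, W (2*n+1) = (B n).comp (X^2 + C p * X + C q)
        + (X - C a) * (R n).comp (X^2 + C p * X + C q)) :
    ∀ m : ℕ,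
      R (m+2) = (X - C (a^2 + p*a + q) + C ((a - β) * (a + p + β) - α₂ - α₁)) * R (m+1)
        - C (α₁ * α₂ + γ * (p + 2*β)) * R m - C (γ^2) * prevP R m := by
  -- the recurrence split by parity, with signs evaluated
  have hodd : ∀ k, W (2*k+3) = (X + C p + C β) * W (2*k+2) - C α₂ * W (2*k+1)
      + C γ * W (2*k) := by
    intro k
    have h := hWrec (2*k)
    have h1 : (-1 : ℂ)^(2*k+1) = -1 := by simp [pow_succ, pow_mul]
    simp only [Nat.mul_mod_right, if_true, h1] at h
    rw [h]
    simp only [C_neg, C_add, C_mul, C_1]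
    ring
  have heven : ∀ k, W (2*k+4) = (X - C β) * W (2*k+3) - C α₁ * W (2*k+2)
      - C γ * W (2*k+1) := by
    intro k
    have h := hWrec (2*k+1)
    have h1 : (-1 : ℂ)^(2*k+1+1) = 1 := by simp [pow_succ, pow_mul]
    have h2 : ¬ (2*k+1) % 2 = 0 := by omega
    simp only [if_neg h2, h1, one_mul] at h
    exact h
  intro m
  rw [← sub_eq_zero]
  -- the polynomial multiplying `O_{m+1}`, still in the variable standing for `ω(x)`
  set c : Polynomial ℂ :=
    X - C (a^2 + p*a + q) + C ((a - β) * (a + p + β) - α₂ - α₁) with hc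
  apply right_eq_zero_of_quadratic_decomp p q a
    (B (m+2) - (c * B (m+1) - C (α₁ * α₂ + γ * (p + 2*β)) * B m - C (γ^2) * prevP B m))
  have hcω : c.comp (X^2 + C p * X + C q) = (X + C p + C β) * (X - C β) - C α₁ - C α₂ := by
    simp only [hc, sub_comp, add_comp, X_comp, C_comp, C_add, C_sub, C_mul, C_pow,
      mul_comp, pow_comp]
    ring
  simp only [sub_comp, mul_comp, C_comp, hcω]
  have o2 := hQDo (m+2)
  have o1 := hQDo (m+1)
  have o0 := hQDo m
  have r2 := hodd (m+1)
  have r1 := hodd m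
  have e2 := heven m
  rw [show 2*(m+2)+1 = 2*m+5 by ring] at o2
  rw [show 2*(m+1)+1 = 2*m+3 by ring] at o1
  rw [show 2*(m+1)+3 = 2*m+5 by ring, show 2*(m+1)+2 = 2*m+4 by ring,
    show 2*(m+1)+1 = 2*m+3 by ring, show 2*(m+1) = 2*m+2 by ring] at r2
  -- `W_{2m+2}` in terms of earlier polynomials, with `W_{-1} = 0` supplied by `prevP`
  have e1 : W (2*m+2) = (X - C β) * W (2*m+1) - C α₁ * W (2*m)
      - C γ * ((prevP B m).comp (X^2 + C p * X + C q)
        + (X - C a) * (prevP R m).comp (X^2 + C p * X + C q)) := by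
    cases m with
    | zero => simp [prevP, hW2, hW0]
    | succ k =>
      simp only [prevP]
      rw [← hQDo k]
      exact heven k
  simp only [C_add, C_mul, C_pow, C_ofNat]
  linear_combination (-1) * o2 + ((X + C p + C β) * (X - C β) - C α₁ - C α₂) * o1
    - (C α₁ * C α₂ + C γ * (C p + 2 * C β)) * o0
    + r2 + (X + C p + C β) * e2 + C α₁ * r1 + C γ * e1
end

section
/- Let β, α₁, α₂, p, q, a ∈ ℂ and γ ∈ ℂ∖{0}, let {W_n} be the 2-orthogonal MPS with recurrence coefficients β_{2n} = −(p+β), β_{2n+1} = β (n ≥ 0), α_{2n+1} = α₁, α_{2n+2} = α₂ (n ≥ 0), γ_n = (−1)ⁿγ (n ≥ 1), and let {P_n}, {R_n}, {a_n}, {b_n} be its general quadratic decomposition with respect to ω(x) = x² + px + q and a. Then for every n ≥ 1: P_{n+2}(x) = (x − ω(a) + (a − β)(a + p + β) − α₂ − α₁)·P_{n+1}(x) − (α₁α₂ + γ(p + 2β))·P_n(x) − γ²·P_{n−1}(x). -/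
/-! Write `E n = W (2n)`, `O n = W (2n+1)`, `u = X + p + β`, `v = X - β`, and let `S` be the
shift in `n`. The recurrence of `W` reads `(S + α₂) O = (u S + γ) E` and `(v S - γ) O = (S² + α₁ S) E`. Applying
`v S - γ` to the first relation and `S + α₂` to the second eliminates `O` and gives
`S³ E = (u v - α₁ - α₂) S² E - (α₁ α₂ + γ (p + 2 β)) S E - γ² E`.
The coefficients are polynomials in `ω = X² + p X + q`, since `u v = ω - q - β (p + β)`. The
decomposition `F(ω) + (X - a) G(ω)` is unique (`quadratic_decomp_eq_zero`), so the same recurrence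
holds for its first component `P`. -/

open Polynomial

/-- The summands `F(ω)` and `(X - a) G(ω)` have even and odd degree, so they cannot cancel unless
both vanish. -/
lemma quadratic_decomp_eq_zero (p q a : ℂ) (F G : Polynomial ℂ)
    (h : F.comp (X^2 + C p * X + C q) + (X - C a) * G.comp (X^2 + C p * X + C q) = 0) :
    F = 0 := by
  have hω : (X^2 + C p * X + C q : Polynomial ℂ).natDegree = 2 := by
    compute_degree!
  by_contra hF
  have hFc : F.comp (X^2 + C p * X + C q) ≠ 0 := by
    intro h0
    rw [comp_eq_zero_iff] at h0
    rcases h0 with h0 | ⟨-, h0⟩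
    · exact hF h0
    · rw [h0, natDegree_C] at hω
      omega
  have h' : F.comp (X^2 + C p * X + C q) = -((X - C a) * G.comp (X^2 + C p * X + C q)) :=
    eq_neg_of_add_eq_zero_left h
  have hGc : G.comp (X^2 + C p * X + C q) ≠ 0 := by
    intro h0
    rw [h0, mul_zero, neg_zero] at h'
    exact hFc h'
  have hd := congrArg natDegree h'
  rw [natDegree_neg, natDegree_mul (X_sub_C_ne_zero a) hGc, natDegree_comp, natDegree_comp,
    natDegree_X_sub_C, hω] at hd
  omega

theorem stmt_11 (β α₁ α₂ p q a γ : ℂ) (hγ : γ ≠ 0)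
    (W : ℕ → Polynomial ℂ)
    (hW0 : W 0 = 1) (hW1 : W 1 = X - C (-(p + β)))
    (hW2 : W 2 = (X - C β) * W 1 - C α₁)
    (hWrec : ∀ n : ℕ, W (n+3) = (X - C (if n % 2 = 0 then -(p + β) else β)) * W (n+2)
        - C (if n % 2 = 0 then α₂ else α₁) * W (n+1) - C ((-1 : ℂ)^(n+1) * γ) * W n)
    (P R A B : ℕ → Polynomial ℂ)
    (hP : ∀ n, (P n).Monic ∧ (P n).natDegree = n)
    (hR : ∀ n, (R n).Monic ∧ (R n).natDegree = n)
    (hA : ∀ n, (A n).natDegree ≤ n)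
    (hB : ∀ n, (B n).natDegree ≤ n)
    (hQDe : ∀ n, W (2*n) = (P n).comp (X^2 + C p * X + C q)
        + (X - C a) * (prevP A n).comp (X^2 + C p * X + C q))
    (hQDo : ∀ n, W (2*n+1) = (B n).comp (X^2 + C p * X + C q)
        + (X - C a) * (R n).comp (X^2 + C p * X + C q)) :
    ∀ m : ℕ,
      P (m+3) = (X - C (a^2 + p*a + q) + C ((a - β) * (a + p + β) - α₂ - α₁)) * P (m+2)
        - C (α₁ * α₂ + γ * (p + 2*β)) * P (m+1) - C (γ^2) * P m := by
  intro m
  have odd_rec : ∀ n, W (2*(n+1)+1) = (X + C p + C β) * W (2*(n+1)) - C α₂ * W (2*n+1)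
      + C γ * W (2*n) := by
    intro n
    have h := hWrec (2*n)
    have e : (-1 : ℂ)^(2*n+1) = -1 := by rw [pow_succ, pow_mul]; simp
    rw [if_pos (by omega), if_pos (by omega), e] at h
    rw [show 2*(n+1)+1 = 2*n+3 by ring, show 2*(n+1) = 2*n+2 by ring, h]
    simp only [C_neg, C_add, C_mul, C_1]
    ring
  have even_rec : ∀ n, W (2*(n+2)) = (X - C β) * W (2*(n+1)+1) - C α₁ * W (2*(n+1))
      - C γ * W (2*n+1) := by
    intro n
    have h := hWrec (2*n+1)
    have e : (-1 : ℂ)^(2*n+1+1) = 1 := by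
      rw [show 2*n+1+1 = 2*(n+1) by ring, pow_mul]; simp
    rw [if_neg (by omega), if_neg (by omega), e, one_mul] at h
    exact h
  have hE : W (2*(m+3)) = ((X^2 + C p * X + C q) - C (a^2 + p*a + q)
        + C ((a - β) * (a + p + β) - α₂ - α₁)) * W (2*(m+2))
        - C (α₁ * α₂ + γ * (p + 2*β)) * W (2*(m+1)) - C (γ^2) * W (2*m) := by
    have C2 : (C 2 : Polynomial ℂ) = 2 := rfl
    simp only [C_add, C_sub, C_mul, C_pow, C2]
    linear_combination even_rec (m+1) + C α₂ * even_rec m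
      + (X - C β) * odd_rec (m+1) - C γ * odd_rec m
  rw [← sub_eq_zero]
  apply quadratic_decomp_eq_zero p q a _
    (prevP A (m+3) - ((X - C (a^2 + p*a + q) + C ((a - β) * (a + p + β) - α₂ - α₁))
        * prevP A (m+2)
        - C (α₁ * α₂ + γ * (p + 2*β)) * prevP A (m+1) - C (γ^2) * prevP A m))
  rw [hQDe, hQDe, hQDe, hQDe] at hE
  simp only [sub_comp, add_comp, mul_comp, C_comp, X_comp]
  linear_combination hE
end
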